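/- Let T be a positive integer and δ a real number such that sin(δ/2 + π/(2T)) ≠ 0 and sin(δ/2 − π/(2T)) ≠ 0. Then Σ_{τ=0}^{T−1} e^{iτδ}·sin(π(τ + 1/2)/T) = −e^{i·δ(T−1)/2}·cos(Tδ/2)·cos(δ/2)·sin(π/(2T)) / (sin(δ/2 + π/(2T))·sin(δ/2 − π/(2T))), as an identity of complex numbers. -/

import Mathlib

open Real Complex

theorem Complex.sin_eq_of_exp_mul_I {z E : ℂ} (h : Complex.exp (z * Complex.I) = E) :
    Complex.sin z = (E⁻¹ - E) * Complex.I / 2 := by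
  rw [Complex.sin, neg_mul, Complex.exp_neg, h]

theorem Complex.cos_eq_of_exp_mul_I {z E : ℂ} (h : Complex.exp (z * Complex.I) = E) :
    Complex.cos z = (E + E⁻¹) / 2 := by
  rw [Complex.cos, neg_mul, Complex.exp_neg, h]

theorem sq_sub_one_ne_zero_of_inv_sub_ne_zero {A : ℂ}
    (h : (A⁻¹ - A) * Complex.I / 2 ≠ 0) : A ^ 2 - 1 ≠ 0 := by
  intro h'
  apply h
  have hA : A ≠ 0 := by
    rintro rfl
    norm_num at h'
  have : A⁻¹ = A := inv_eq_of_mul_eq_one_left (by linear_combination h')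
  rw [this]
  ring

theorem stmt5 (T : ℕ) (hT : 0 < T) (δ : ℝ)
    (h₁ : Real.sin (δ/2 + π/(2*T)) ≠ 0) (h₂ : Real.sin (δ/2 - π/(2*T)) ≠ 0) :
    ∑ τ ∈ Finset.range T,
        Complex.exp (Complex.I * τ * δ) * (Real.sin (π * (τ + 1/2) / T) : ℂ)
      = -Complex.exp (Complex.I * δ * (T - 1) / 2) * (Real.cos (T * δ / 2) : ℂ)
          * (Real.cos (δ/2) : ℂ) * (Real.sin (π/(2*T)) : ℂ)
        / ((Real.sin (δ/2 + π/(2*T)) : ℂ) * (Real.sin (δ/2 - π/(2*T)) : ℂ)) := by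
  have hT' : (T : ℂ) ≠ 0 := by exact_mod_cast hT.ne'
  rw [← Complex.ofReal_ne_zero] at h₁ h₂
  push_cast at h₁ h₂ ⊢
  obtain ⟨w, hw⟩ : ∃ w, Complex.exp ((δ : ℂ) / 2 * Complex.I) = w := ⟨_, rfl⟩
  obtain ⟨q, hq⟩ : ∃ q, Complex.exp ((π : ℂ) / (2 * T) * Complex.I) = q := ⟨_, rfl⟩
  have w0 : w ≠ 0 := hw ▸ Complex.exp_ne_zero _
  have q0 : q ≠ 0 := hq ▸ Complex.exp_ne_zero _
  have hqT : (q ^ 2) ^ T = -1 := by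
    rw [← hq, ← pow_mul, ← Complex.exp_nat_mul, ← Complex.exp_pi_mul_I]
    congr 1
    push_cast
    field_simp
  have hadd : Complex.exp (((δ : ℂ) / 2 + π / (2 * T)) * Complex.I) = w * q := by
    rw [add_mul, Complex.exp_add, hw, hq]
  have hsub : Complex.exp (((δ : ℂ) / 2 - π / (2 * T)) * Complex.I) = w / q := by
    rw [sub_mul, Complex.exp_sub, hw, hq]
  have hwT : Complex.exp ((T : ℂ) * δ / 2 * Complex.I) = w ^ T := by
    rw [← hw, ← Complex.exp_nat_mul]
    congr 1
    ring
  have hphase : Complex.exp (Complex.I * δ * (T - 1) / 2) = w ^ T / w := by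
    rw [← hwT, ← hw, ← Complex.exp_sub]
    congr 1
    ring
  have hterm : ∀ τ : ℕ, Complex.exp (Complex.I * τ * δ) * Complex.sin (π * (τ + 1/2) / T)
      = Complex.I / 2 * (q⁻¹ * ((w / q) ^ 2) ^ τ - q * ((w * q) ^ 2) ^ τ) := by
    intro τ
    have hexp : Complex.exp (Complex.I * τ * δ) = (w ^ 2) ^ τ := by
      rw [← hw, ← pow_mul, ← Complex.exp_nat_mul]
      congr 1
      push_cast
      ring
    have hsin : Complex.exp ((π : ℂ) * (τ + 1/2) / T * Complex.I) = (q ^ 2) ^ τ * q := by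
      rw [← hq, ← pow_mul, ← pow_succ, ← Complex.exp_nat_mul]
      congr 1
      push_cast
      field_simp
    rw [hexp, Complex.sin_eq_of_exp_mul_I hsin, mul_pow w q, div_pow w q, mul_pow (w ^ 2),
      div_pow (w ^ 2)]
    field_simp
  rw [Complex.sin_eq_of_exp_mul_I hadd] at h₁ ⊢
  rw [Complex.sin_eq_of_exp_mul_I hsub] at h₂ ⊢
  have hA := sq_sub_one_ne_zero_of_inv_sub_ne_zero h₁
  have hB := sq_sub_one_ne_zero_of_inv_sub_ne_zero h₂
  rw [Finset.sum_congr rfl fun τ _ => hterm τ, ← Finset.mul_sum, Finset.sum_sub_distrib,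
    ← Finset.mul_sum, ← Finset.mul_sum, geom_sum_eq (sub_ne_zero.mp hA),
    geom_sum_eq (sub_ne_zero.mp hB), hphase, Complex.cos_eq_of_exp_mul_I hwT,
    Complex.cos_eq_of_exp_mul_I hw, Complex.sin_eq_of_exp_mul_I hq, mul_pow w q, div_pow w q,
    mul_pow (w ^ 2), div_pow (w ^ 2), hqT, ← pow_mul, mul_comm 2 T, pow_mul]
  have hW : w ^ T ≠ 0 := pow_ne_zero _ w0
  generalize w ^ T = W at hW ⊢
  rw [eq_div_iff (mul_ne_zero h₁ h₂)]
  have hA' : w ^ 2 * q ^ 2 - 1 ≠ 0 := by rwa [← mul_pow]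
  have hB' : w ^ 2 - q ^ 2 ≠ 0 := by
    intro h
    apply hB
    rw [div_pow, sub_eq_zero.mp h, div_self (pow_ne_zero 2 q0), sub_self]
  have hB'' : w ^ 2 / q ^ 2 - 1 = (w ^ 2 - q ^ 2) / q ^ 2 := by field_simp
  rw [hB'']
  obtain ⟨a, ha⟩ : ∃ a, a = w ^ 2 * q ^ 2 - 1 := ⟨_, rfl⟩
  obtain ⟨b, hb⟩ : ∃ b, b = w ^ 2 - q ^ 2 := ⟨_, rfl⟩
  rw [← ha] at hA' ⊢
  rw [← hb] at hB' ⊢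
  field_simp
  rw [Complex.I_sq, ha, hb]
  ring
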